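/- For every integer m ≥ 6 there exists a finite planar ({5,m};3)-graph on 2m+2 vertices, so m+7 ≤ n_p({5,m};3) ≤ 2m+2; moreover, for every m ≥ 13 there exists a finite planar ({5,m};3)-graph on m+15 vertices, so in that range n_p({5,m};3) ≤ m+15. -/

import Mathlib

open SimpleGraph

/-- `H` is a minor of `G`: there is an assignment of pairwise disjoint connected
branch sets in `G` to the vertices of `H`, with an edge of `G` between the branch
sets of any two adjacent vertices of `H`. -/
def SimpleGraph.IsMinorOf {W V : Type*} (H : SimpleGraph W) (G : SimpleGraph V) : Prop :=
  ∃ f : W → Set V,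
    (∀ w, (G.induce (f w)).Connected) ∧
    (Pairwise fun w₁ w₂ => Disjoint (f w₁) (f w₂)) ∧
    ∀ ⦃w₁ w₂⦄, H.Adj w₁ w₂ → ∃ v₁ ∈ f w₁, ∃ v₂ ∈ f w₂, G.Adj v₁ v₂

/-- A graph is planar iff it has no `K₅` minor and no `K₃,₃` minor (Wagner's theorem). -/
def SimpleGraph.IsPlanar {V : Type*} (G : SimpleGraph V) : Prop :=
  ¬ (completeGraph (Fin 5)).IsMinorOf G ∧
    ¬ (completeBipartiteGraph (Fin 3) (Fin 3)).IsMinorOf G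

/-- A graph is outerplanar iff it has no `K₄` minor and no `K₂,₃` minor. -/
def SimpleGraph.IsOuterplanar {V : Type*} (G : SimpleGraph V) : Prop :=
  ¬ (completeGraph (Fin 4)).IsMinorOf G ∧
    ¬ (completeBipartiteGraph (Fin 2) (Fin 3)).IsMinorOf G

/-- The degree of a vertex, as the cardinality of its neighbour set. -/
noncomputable def SimpleGraph.degN {V : Type*} (G : SimpleGraph V) (v : V) : ℕ :=
  (G.neighborSet v).ncard

/-- An `({r,m};g)`-graph: girth `g`, every vertex has degree `r` or `m`, both occur. -/
def IsBigirthGraph {V : Type*} (G : SimpleGraph V) (r m g : ℕ) : Prop :=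
  G.girth = g ∧ (∀ v, G.degN v = r ∨ G.degN v = m) ∧
    (∃ v, G.degN v = r) ∧ (∃ v, G.degN v = m)

/-- The set of orders of finite planar `({r,m};g)`-graphs. -/
def bicageOrders (r m g : ℕ) : Set ℕ :=
  {n | ∃ (V : Type) (_ : Fintype V) (G : SimpleGraph V),
    G.IsPlanar ∧ IsBigirthGraph G r m g ∧ Fintype.card V = n}

/-!
A planar graph has no `K₅` minor, so by a theorem of Mader it has at most `3n - 6` edges; comparing
this with the degree sum `≥ 5(n - 1) + m` gives `n ≥ m + 7`. Mader's bound is proved by contracting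
an edge with few triangles; if all edges at a vertex of degree at most 5 lie in three triangles, the
neighbourhood of that vertex yields a `K₅` minor.

The upper bounds come from the gyroelongated bipyramid over an `m`-gon and, for `m ≥ 13`, from a
triangulated fan around a vertex of degree `m` whose two ends are closed off by caps. Both are
unions of two pages of a book embedding. To see without any topology that this excludes `K₅` and
`K₃,₃` minors, call a drawing even if independent edges cross an even number of times. The union of
two pages has an even drawing, and even drawings are inherited by minors. But `K₅` and `K₃,₃` have
none: pulling an edge across a vertex does not change the parity of the total number of crossings of
independent edges, which is odd.
-/

section Minors

variable {U V W : Type*} {G : SimpleGraph V} {H : SimpleGraph W} {K : SimpleGraph U}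

theorem connected_induce_singleton (G : SimpleGraph V) (v : V) :
    (G.induce ({v} : Set V)).Connected :=
  { preconnected := .of_subsingleton, nonempty := ⟨⟨v, rfl⟩⟩ }

theorem connected_induce_iUnion {s : Set V} {g : V → Set U} (hs : (G.induce s).Connected)
    (hg : ∀ v, (K.induce (g v)).Connected)
    (hadj : ∀ ⦃v w⦄, G.Adj v w → ∃ x ∈ g v, ∃ y ∈ g w, K.Adj x y) :
    (K.induce (⋃ v : s, g v)).Connected := by
  have hsub (v : s) : g v ⊆ ⋃ v : s, g v := Set.subset_iUnion_of_subset v subset_rfl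
  have hfiber (v : s) {x y : U} (hx : x ∈ g v) (hy : y ∈ g v) :
      (K.induce (⋃ v : s, g v)).Reachable ⟨x, hsub v hx⟩ ⟨y, hsub v hy⟩ :=
    ((hg v).preconnected ⟨x, hx⟩ ⟨y, hy⟩).map (induceHomOfLE K (hsub v)).toHom
  have hwalk {v w : s} (p : (G.induce s).Walk v w) {x y : U} (hx : x ∈ g v) (hy : y ∈ g w) :
      (K.induce (⋃ v : s, g v)).Reachable ⟨x, hsub v hx⟩ ⟨y, hsub w hy⟩ := by
    induction p generalizing x with
    | nil => exact hfiber _ hx hy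
    | cons hvw _ ih =>
      obtain ⟨x', hx', y', hy', hxy⟩ := hadj hvw
      have hedge : (K.induce (⋃ v : s, g v)).Adj ⟨x', hsub _ hx'⟩ ⟨y', hsub _ hy'⟩ := hxy
      exact (hfiber _ hx hx').trans (.trans hedge.reachable (ih hy' hy))
  obtain ⟨v₀⟩ := hs.nonempty
  obtain ⟨x₀, hx₀⟩ := (hg v₀).nonempty
  refine (connected_iff_exists_forall_reachable _).mpr ⟨⟨x₀, hsub v₀ hx₀⟩, ?_⟩
  rintro ⟨x, hx⟩
  obtain ⟨v, hxv⟩ := Set.mem_iUnion.mp hx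
  obtain ⟨p⟩ := hs.preconnected v₀ v
  exact hwalk p hx₀ hxv

theorem isMinorOf_trans (hHG : H.IsMinorOf G) (hGK : G.IsMinorOf K) : H.IsMinorOf K := by
  obtain ⟨f, hf, hfdisj, hfadj⟩ := hHG
  obtain ⟨g, hg, hgdisj, hgadj⟩ := hGK
  refine ⟨fun w => ⋃ v : f w, g v, fun w => connected_induce_iUnion (hf w) hg hgadj, ?_, ?_⟩
  · intro w₁ w₂ hw
    simp only [Set.disjoint_iUnion_left, Set.disjoint_iUnion_right]
    exact fun v₂ v₁ => hgdisj ((hfdisj hw).ne_of_mem v₁.2 v₂.2)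
  · intro w₁ w₂ hw
    obtain ⟨v₁, hv₁, v₂, hv₂, hv⟩ := hfadj hw
    obtain ⟨x, hx, y, hy, hxy⟩ := hgadj hv
    exact ⟨x, Set.mem_iUnion.mpr ⟨⟨v₁, hv₁⟩, hx⟩, y, Set.mem_iUnion.mpr ⟨⟨v₂, hv₂⟩, hy⟩, hxy⟩

theorem isMinorOf_of_isContained (h : H ⊑ G) : H.IsMinorOf G := by
  obtain ⟨f⟩ := h
  refine ⟨fun w => {f w}, fun w => connected_induce_singleton G _, fun w₁ w₂ hw => ?_,
    fun w₁ w₂ hw => ⟨f w₁, rfl, f w₂, rfl, f.toHom.map_adj hw⟩⟩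
  exact Set.disjoint_singleton.mpr (f.injective.ne hw)

theorem completeGraph_isMinorOf_of_isNClique {n : ℕ} {A : Set V} {s : Finset V}
    (hA : (G.induce A).Connected) (hs : G.IsNClique n s) (hAs : Disjoint A s)
    (hadj : ∀ x ∈ s, ∃ a ∈ A, G.Adj a x) : (completeGraph (Fin (n + 1))).IsMinorOf G := by
  let e : Fin n ≃ s := (s.equivFinOfCardEq hs.card_eq).symm
  refine ⟨Fin.cons A fun i => {(e i : V)}, ?_, ?_, ?_⟩
  · exact Fin.cases hA fun i => connected_induce_singleton G _
  · intro i j hij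
    cases i using Fin.cases <;> cases j using Fin.cases
    · exact absurd rfl hij
    · exact Set.disjoint_singleton_right.mpr (hAs.notMem_of_mem_right (e _).2)
    · exact Set.disjoint_singleton_left.mpr (hAs.notMem_of_mem_right (e _).2)
    · exact Set.disjoint_singleton.mpr fun h => hij (congrArg _ (e.injective (Subtype.ext h)))
  · intro i j hij
    cases i using Fin.cases <;> cases j using Fin.cases
    · exact absurd rfl hij
    · obtain ⟨a, ha, hadj⟩ := hadj _ (e _).2
      exact ⟨a, ha, _, rfl, hadj⟩
    · obtain ⟨a, ha, hadj⟩ := hadj _ (e _).2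
      exact ⟨_, rfl, a, ha, hadj.symm⟩
    · refine ⟨_, rfl, _, rfl, hs.isClique (e _).2 (e _).2 fun h => hij ?_⟩
      exact congrArg _ (e.injective (Subtype.ext h))

/-- The graph obtained from `G` by contracting `v` into `u`. -/
def contractInto (G : SimpleGraph V) (u v : V) : SimpleGraph ({v}ᶜ : Set V) :=
  SimpleGraph.fromRel fun x y => G.Adj x y ∨ (↑x = u ∧ G.Adj v y)

theorem isMinorOf_contractInto {u v : V} (huv : G.Adj u v) :
    (contractInto G u v).IsMinorOf G := by
  classical
  refine ⟨fun x => if (x : V) = u then {u, v} else {(x : V)}, ?_, ?_, ?_⟩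
  · intro x
    beta_reduce
    rcases eq_or_ne (x : V) u with hx | hx
    · rw [if_pos hx]
      exact induce_pair_connected_of_adj huv
    · rw [if_neg hx]
      exact connected_induce_singleton G _
  · intro x y hxy
    have hxy' : (x : V) ≠ y := Subtype.coe_injective.ne hxy
    have : (x : V) ≠ v := x.2
    have : (y : V) ≠ v := y.2
    refine Set.disjoint_left.mpr fun z hzx hzy => ?_
    grind
  · rintro x y ⟨-, (hxy | ⟨hxu, hxy⟩) | (hxy | ⟨hyu, hxy⟩)⟩
    · exact ⟨x, by grind, y, by grind, hxy⟩
    · exact ⟨v, by grind, y, by grind, hxy⟩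
    · exact ⟨x, by grind, y, by grind, hxy.symm⟩
    · exact ⟨x, by grind, v, by grind, hxy.symm⟩

theorem induce_compl_singleton_le_contractInto (u v : V) :
    G.induce {v}ᶜ ≤ contractInto G u v := fun _ _ hxy => ⟨hxy.ne, .inl (.inl hxy)⟩

theorem card_edgeFinset_le_card_edgeFinset_contractInto [Fintype V] [DecidableEq V]
    [DecidableRel G.Adj] {u v : V} [DecidableRel (contractInto G u v).Adj] (huv : G.Adj u v) :
    G.edgeFinset.card ≤ (contractInto G u v).edgeFinset.card + 1 +
      (G.neighborFinset u ∩ G.neighborFinset v).card := by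
  let u' : ({v}ᶜ : Set V) := ⟨u, huv.ne⟩
  let newNeighbors : Finset ({v}ᶜ : Set V) :=
    (G.neighborFinset v \ insert u (G.neighborFinset u)).subtype (· ∈ ({v}ᶜ : Set V))
  have hnew : newNeighbors.card = (G.neighborFinset v \ insert u (G.neighborFinset u)).card := by
    rw [Finset.card_subtype, Finset.filter_true_of_mem]
    intro y hy
    exact ((mem_neighborFinset _ _ _).mp (Finset.mem_sdiff.mp hy).1).ne'
  have hunion : (G.induce {v}ᶜ).edgeFinset ∪ newNeighbors.image (fun y => s(u', y)) ⊆
      (contractInto G u v).edgeFinset := by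
    refine Finset.union_subset (edgeFinset_mono (induce_compl_singleton_le_contractInto u v)) ?_
    refine Finset.image_subset_iff.mpr fun y hy => ?_
    simp only [newNeighbors, Finset.mem_subtype, Finset.mem_sdiff, mem_neighborFinset,
      Finset.mem_insert, not_or] at hy
    exact mem_edgeFinset.mpr
      ⟨fun h => hy.2.1 (congrArg Subtype.val h).symm, .inl (.inr ⟨rfl, hy.1⟩)⟩
  have hdisj : Disjoint (G.induce {v}ᶜ).edgeFinset (newNeighbors.image (fun y => s(u', y))) := by
    refine Finset.disjoint_right.mpr (Finset.forall_mem_image.mpr fun y hy => ?_)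
    simp only [newNeighbors, Finset.mem_subtype, Finset.mem_sdiff, mem_neighborFinset,
      Finset.mem_insert, not_or] at hy
    exact fun h => hy.2.2 (mem_edgeFinset.mp h)
  have hcard := Finset.card_le_card hunion
  rw [Finset.card_union_of_disjoint hdisj, card_edgeFinset_induce_compl_singleton,
    card_edgeFinset_deleteIncidenceSet,
    Finset.card_image_of_injective _ fun _ _ => Sym2.congr_right.mp, hnew] at hcard
  have hdeg := Finset.card_sdiff_add_card_inter (G.neighborFinset v) (insert u (G.neighborFinset u))
  rw [Finset.inter_insert_of_mem ((mem_neighborFinset _ _ _).mpr huv.symm),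
    card_neighborFinset_eq_degree, Finset.inter_comm] at hdeg
  have hinsert := Finset.card_insert_le u (G.neighborFinset u ∩ G.neighborFinset v)
  omega

end Minors

section Mader

variable {V : Type*} {G : SimpleGraph V}

theorem exists_le_card_edgeFinset_eq [Fintype V] [DecidableRel G.Adj] {k : ℕ}
    (hk : k ≤ G.edgeFinset.card) :
    ∃ (H : SimpleGraph V) (_ : DecidableRel H.Adj), H ≤ G ∧ H.edgeFinset.card = k := by
  classical
  obtain ⟨F, hFG, hF⟩ := Finset.exists_subset_card_eq hk
  have hFG' : (F : Set (Sym2 V)) ⊆ G.edgeSet := by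
    rwa [← coe_edgeFinset, Finset.coe_subset]
  refine ⟨SimpleGraph.fromEdgeSet F, inferInstance, ?_, ?_⟩
  · rw [← fromEdgeSet_edgeSet G]
    exact fromEdgeSet_mono hFG'
  · rw [← hF]
    congr 1
    ext e
    simp only [mem_edgeFinset, edgeSet_fromEdgeSet, Set.mem_sdiff, Finset.mem_coe,
      and_iff_left_iff_imp]
    exact fun he => G.not_isDiag_of_mem_edgeSet (hFG' he)

-- Merging `a` with `c` makes up for the possible non-edges `ab`, `cd` and `ce`.
theorem completeGraph_five_isMinorOf_of_adj {v a b c d e : V} (hab : a ≠ b) (hcd : c ≠ d)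
    (hce : c ≠ e) (hde : G.Adj d e) (hva : G.Adj v a) (hvb : G.Adj v b)
    (hadj : ∀ x ∈ ({c, d, e} : Set V), G.Adj v x ∧ G.Adj a x ∧ G.Adj b x) :
    (completeGraph (Fin 5)).IsMinorOf G := by
  classical
  simp only [Set.mem_insert_iff, Set.mem_singleton_iff, forall_eq_or_imp, forall_eq] at hadj
  obtain ⟨⟨hvc, hac, hbc⟩, ⟨hvd, had, hbd⟩, hve, hae, hbe⟩ := hadj
  refine completeGraph_isMinorOf_of_isNClique (s := {v, b, d, e})
    (induce_pair_connected_of_adj hac) ?_ ?_ ?_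
  · exact (is3Clique_triple_iff.mpr ⟨hbd, hbe, hde⟩).insert (by grind)
  · rw [Set.disjoint_left]
    grind [SimpleGraph.irrefl]
  · have := hva.symm
    have := hbc.symm
    grind

theorem completeGraph_five_isMinorOf_of_few_nonadjacent [DecidableEq V] [DecidableRel G.Adj]
    {v : V} {N : Finset V} (hv : ∀ x ∈ N, G.Adj v x) (hN : N.Nonempty) (hN₅ : N.card ≤ 5)
    (hmiss : ∀ x ∈ N, ((N.erase x).filter fun y => ¬ G.Adj x y).card + 4 ≤ N.card) :
    (completeGraph (Fin 5)).IsMinorOf G := by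
  by_cases hclique : G.IsClique N
  · obtain ⟨x, hx⟩ := hN
    obtain ⟨s, hsN, hs⟩ := Finset.exists_subset_card_eq (le_of_add_le_right (hmiss x hx))
    refine completeGraph_isMinorOf_of_isNClique (connected_induce_singleton G v)
      ⟨hclique.subset (Finset.coe_subset.mpr hsN), hs⟩ ?_ fun x hx => ⟨v, rfl, hv x (hsN hx)⟩
    exact Set.disjoint_singleton_left.mpr fun hvs => (hv v (hsN hvs)).ne rfl
  have hadj {x y z : V} (hx : x ∈ N) (hy : y ∈ N) (hz : z ∈ N) (hxy : x ≠ y) (hxz : x ≠ z)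
      (hyz : y ≠ z) (hnadj : ¬ G.Adj x y) : G.Adj x z := by
    by_contra hnadj'
    have hsub : ({y, z} : Finset V) ⊆ (N.erase x).filter fun w => ¬ G.Adj x w := by grind
    have := Finset.card_le_card hsub
    have := hmiss x hx
    have := Finset.card_pair hyz
    omega
  obtain ⟨a, ha, b, hb, hab, hnab⟩ : ∃ a ∈ N, ∃ b ∈ N, a ≠ b ∧ ¬ G.Adj a b := by
    simpa [IsClique, Set.Pairwise] using hclique
  have hrest : 2 < ((N.erase a).erase b).card := by
    have hmem : b ∈ (N.erase a).filter fun y => ¬ G.Adj a y := by grind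
    have := Finset.card_pos.mpr ⟨b, hmem⟩
    have := hmiss a ha
    have := Finset.card_erase_add_one ha
    have := Finset.card_erase_add_one (Finset.mem_erase.mpr ⟨hab.symm, hb⟩)
    omega
  obtain ⟨c, hc, d, hd, e, he, hcd, hce, hde⟩ := Finset.two_lt_card.mp hrest
  have hadj_vab {x : V} (hx : x ∈ (N.erase a).erase b) : G.Adj v x ∧ G.Adj a x ∧ G.Adj b x := by
    simp only [Finset.mem_erase] at hx
    exact ⟨hv x hx.2.2, hadj ha hb hx.2.2 hab hx.2.1.symm hx.1.symm hnab,
      hadj hb ha hx.2.2 hab.symm hx.1.symm hx.2.1.symm fun h => hnab h.symm⟩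
  by_cases hadj_de : G.Adj d e
  · refine completeGraph_five_isMinorOf_of_adj hab hcd hce hadj_de (hv a ha) (hv b hb) ?_
    rintro x (rfl | rfl | rfl) <;> exact hadj_vab ‹_›
  · have hadj_dc : G.Adj d c :=
      hadj (by grind) (by grind) (by grind) hde hcd.symm hce.symm hadj_de
    refine completeGraph_five_isMinorOf_of_adj hab hde.symm hce.symm hadj_dc (hv a ha) (hv b hb) ?_
    rintro x (rfl | rfl | rfl) <;> exact hadj_vab ‹_›

theorem completeGraph_five_isMinorOf_of_common_neighbors [Fintype V] [DecidableEq V]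
    [DecidableRel G.Adj] {v : V} (h₀ : G.degree v ≠ 0) (h₅ : G.degree v ≤ 5)
    (hcommon : ∀ u, G.Adj u v → 3 ≤ (G.neighborFinset u ∩ G.neighborFinset v).card) :
    (completeGraph (Fin 5)).IsMinorOf G := by
  refine completeGraph_five_isMinorOf_of_few_nonadjacent (v := v) (N := G.neighborFinset v)
    (fun x => (mem_neighborFinset _ _ _).mp)
    (Finset.card_pos.mp (by simpa [Nat.pos_iff_ne_zero])) (by simpa) ?_
  intro u hu
  have hadj := ((mem_neighborFinset _ _ _).mp hu).symm
  have hfilter : G.neighborFinset u ∩ G.neighborFinset v =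
      ((G.neighborFinset v).erase u).filter (G.Adj u) := by
    grind [mem_neighborFinset, SimpleGraph.irrefl]
  have hcount :=
    Finset.card_filter_add_card_filter_not (s := (G.neighborFinset v).erase u) (G.Adj u)
  rw [← hfilter] at hcount
  have := hcommon u hadj
  have := Finset.card_erase_add_one hu
  omega

theorem completeGraph_five_isMinorOf_of_card_edgeFinset [Fintype V] [DecidableRel G.Adj]
    (hV : 3 ≤ Fintype.card V) (hE : 3 * Fintype.card V ≤ G.edgeFinset.card + 5) :
    (completeGraph (Fin 5)).IsMinorOf G := by
  classical
  induction hn : Fintype.card V using Nat.strong_induction_on generalizing V with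
  | _ n ih =>
  subst hn
  obtain ⟨H, _, hHG, hH⟩ :=
    exists_le_card_edgeFinset_eq (G := G) (k := 3 * Fintype.card V - 5) (by omega)
  suffices h : (completeGraph (Fin 5)).IsMinorOf H from
    isMinorOf_trans h (isMinorOf_of_isContained (.of_le hHG))
  have hV₃ : Fintype.card V ≠ 3 := by
    intro hV₃
    have := H.card_edgeFinset_le_card_choose_two
    rw [hH, hV₃] at this
    exact absurd this (by decide)
  obtain ⟨v, hv⟩ : ∃ v, H.degree v ≤ 5 := by
    by_contra! hdeg
    have hsum := Finset.univ.card_nsmul_le_sum (fun v => H.degree v) 6 fun v _ => hdeg v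
    rw [H.sum_degrees_eq_twice_card_edges, Finset.card_univ, smul_eq_mul] at hsum
    omega
  have hcompl : Fintype.card ({v}ᶜ : Set V) + 1 = Fintype.card V := by
    rw [Fintype.card_compl_set, Set.card_singleton]
    omega
  have hsmaller {K : SimpleGraph ({v}ᶜ : Set V)} [DecidableRel K.Adj] (hK : K.IsMinorOf H)
      (hcard : H.edgeFinset.card ≤ K.edgeFinset.card + 3) :
      (completeGraph (Fin 5)).IsMinorOf H :=
    isMinorOf_trans (ih _ (by omega) (by omega) (by omega) rfl) hK
  by_cases h₀ : H.degree v = 0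
  · refine hsmaller (isMinorOf_of_isContained ⟨(Embedding.induce {v}ᶜ).toCopy⟩) ?_
    rw [card_edgeFinset_induce_compl_singleton, card_edgeFinset_deleteIncidenceSet, h₀]
    omega
  by_cases hcommon : ∀ u, H.Adj u v → 3 ≤ (H.neighborFinset u ∩ H.neighborFinset v).card
  · exact completeGraph_five_isMinorOf_of_common_neighbors h₀ hv hcommon
  push Not at hcommon
  obtain ⟨u, huv, hlt⟩ := hcommon
  refine hsmaller (isMinorOf_contractInto huv) ?_
  have := card_edgeFinset_le_card_edgeFinset_contractInto huv
  omega

theorem degree_add_seven_le_card [Fintype V] [DecidableRel G.Adj] (hG : G.IsPlanar)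
    (h₅ : ∀ v, 5 ≤ G.degree v) (w : V) : G.degree w + 7 ≤ Fintype.card V := by
  classical
  have hw := h₅ w
  have hlt := G.degree_lt_card_verts w
  have hE : G.edgeFinset.card + 5 < 3 * Fintype.card V := by
    by_contra! hE
    exact hG.1 (completeGraph_five_isMinorOf_of_card_edgeFinset (by omega) hE)
  have hsum := G.sum_degrees_eq_twice_card_edges
  rw [← Finset.add_sum_erase _ _ (Finset.mem_univ w)] at hsum
  have hrest :=
    (Finset.univ.erase w).card_nsmul_le_sum (fun v => G.degree v) 5 fun v _ => h₅ v
  rw [Finset.card_erase_of_mem (Finset.mem_univ w), Finset.card_univ, smul_eq_mul] at hrest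
  omega

theorem degN_eq_degree [Fintype V] [DecidableRel G.Adj] (v : V) : G.degN v = G.degree v := by
  rw [degN, Set.ncard_eq_toFinset_card', ← card_neighborFinset_eq_degree, neighborFinset]

end Mader

section EvenDrawings

variable {V W : Type*} {G : SimpleGraph V} {H : SimpleGraph W}

/-- The parity of the number of crossings of two curves drawn over a row of vertices: `σ x y` plays
the role of `[x < y]`, the first curve joins `a` to `b` and passes on the other side of the vertices
`x` with `α x = 1`, and the second joins `c` to `d` and does so for `β`. -/
def crossingParity (σ : V → V → ZMod 2) (a b : V) (α : V → ZMod 2) (c d : V) (β : V → ZMod 2) :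
    ZMod 2 :=
  σ a c + σ b c + σ a d + σ b d + α c + α d + β a + β b

/-- `G` has a drawing in which independent edges cross an even number of times, encoded as in van
Kampen's obstruction theory: `σ` orders the vertices along a row, every edge `ab` starts as a
semicircle over the row and is then pulled across the vertices `x` with `τ a b x = 1`. -/
def HasEvenDrawing (G : SimpleGraph V) : Prop :=
  ∃ (σ : V → V → ZMod 2) (τ : V → V → V → ZMod 2),
    (∀ x y, x ≠ y → σ y x = 1 + σ x y) ∧
    ∀ a b c d, G.Adj a b → G.Adj c d → a ≠ c → a ≠ d → b ≠ c → b ≠ d →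
      crossingParity σ a b (τ a b) c d (τ c d) = 0

/-- The vertices that the edges of a walk are pulled across in total, modulo 2, when the edge `ab`
is pulled across the vertices `x` with `τ a b x = 1`. -/
def walkTwist (τ : V → V → V → ZMod 2) {a b : V} (p : G.Walk a b) : V → ZMod 2 :=
  (p.darts.map fun e => τ e.fst e.snd).sum

theorem crossingParity_self_left (σ : V → V → ZMod 2) (a c d : V) (β : V → ZMod 2) :
    crossingParity σ a a 0 c d β = 0 := by
  simp only [crossingParity, Pi.zero_apply]
  grind

theorem crossingParity_self_right (σ : V → V → ZMod 2) (a b c : V) (α : V → ZMod 2) :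
    crossingParity σ a b α c c 0 = 0 := by
  simp only [crossingParity, Pi.zero_apply]
  grind

theorem crossingParity_add_left (σ : V → V → ZMod 2) (a b c u v : V) (α β γ : V → ZMod 2) :
    crossingParity σ a c (α + β) u v γ =
      crossingParity σ a b α u v γ + crossingParity σ b c β u v γ := by
  simp only [crossingParity, Pi.add_apply]
  grind

theorem crossingParity_add_right (σ : V → V → ZMod 2) (u v a b c : V) (α β γ : V → ZMod 2) :
    crossingParity σ u v γ a c (α + β) =
      crossingParity σ u v γ a b α + crossingParity σ u v γ b c β := by
  simp only [crossingParity, Pi.add_apply]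
  grind

theorem crossingParity_walk_right {σ : V → V → ZMod 2} {τ : V → V → V → ZMod 2} {u v a b : V}
    {γ : V → ZMod 2} (q : G.Walk a b)
    (hq : ∀ e ∈ q.darts, crossingParity σ u v γ e.fst e.snd (τ e.fst e.snd) = 0) :
    crossingParity σ u v γ a b (walkTwist τ q) = 0 := by
  induction q with
  | nil => exact crossingParity_self_right σ u v _ γ
  | cons hab q ih =>
    simp only [Walk.darts_cons, List.forall_mem_cons] at hq
    simp only [walkTwist, Walk.darts_cons, List.map_cons, List.sum_cons]
    rw [crossingParity_add_right, hq.1, zero_add]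
    exact ih hq.2

theorem crossingParity_walk_left {σ : V → V → ZMod 2} {τ : V → V → V → ZMod 2} {u v a b : V}
    {γ : V → ZMod 2} (p : G.Walk a b)
    (hp : ∀ e ∈ p.darts, crossingParity σ e.fst e.snd (τ e.fst e.snd) u v γ = 0) :
    crossingParity σ a b (walkTwist τ p) u v γ = 0 := by
  induction p with
  | nil => exact crossingParity_self_left σ _ u v γ
  | cons hab p ih =>
    simp only [Walk.darts_cons, List.forall_mem_cons] at hp
    simp only [walkTwist, Walk.darts_cons, List.map_cons, List.sum_cons]
    rw [crossingParity_add_left, hp.1, zero_add]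
    exact ih hp.2

theorem exists_walk_support_subset {S : Set V} (hS : (G.induce S).Connected) {a b : V} (ha : a ∈ S)
    (hb : b ∈ S) : ∃ p : G.Walk a b, ∀ x ∈ p.support, x ∈ S := by
  obtain ⟨p⟩ := hS.preconnected ⟨a, ha⟩ ⟨b, hb⟩
  refine ⟨p.map (Embedding.induce S).toHom, fun x hx => ?_⟩
  obtain ⟨y, -, rfl⟩ := List.mem_map.mp (Walk.support_map (Embedding.induce S).toHom p ▸ hx)
  exact y.2

theorem HasEvenDrawing.of_isMinorOf (hG : HasEvenDrawing G) (hHG : H.IsMinorOf G) :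
    HasEvenDrawing H := by
  classical
  obtain ⟨σ, τ, hσ, hτ⟩ := hG
  obtain ⟨f, hconn, hdisj, hadj⟩ := hHG
  have hdistinct {i j : W} (hij : i ≠ j) {x y : V} (hx : x ∈ f i) (hy : y ∈ f j) : x ≠ y :=
    (hdisj hij).ne_of_mem hx hy
  choose r hr using fun i => Set.nonempty_coe_sort.mp (hconn i).nonempty
  have hwalk (i j : W) (hij : H.Adj i j) :
      ∃ p : G.Walk (r i) (r j), ∀ x ∈ p.support, x ∈ f i ∪ f j := by
    obtain ⟨x, hx, y, hy, hxy⟩ := hadj hij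
    exact exists_walk_support_subset
      (connected_induce_union (hconn i).preconnected (hconn j).preconnected hx hy hxy)
      (.inl (hr i)) (.inr (hr j))
  choose P hP using hwalk
  refine ⟨fun i j => σ (r i) (r j),
    fun i j k => if hij : H.Adj i j then walkTwist τ (P i j hij) (r k) else 0,
    fun i j hij => hσ _ _ (hdistinct hij (hr i) (hr j)), ?_⟩
  intro i j k l hij hkl hik hil hjk hjl
  have hdisjoint {x y : V} (hx : x ∈ (P i j hij).support) (hy : y ∈ (P k l hkl).support) :
      x ≠ y := by
    rcases hP _ _ hij x hx with hx | hx <;> rcases hP _ _ hkl y hy with hy | hy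
    exacts [hdistinct hik hx hy, hdistinct hil hx hy, hdistinct hjk hx hy, hdistinct hjl hx hy]
  have hcross : crossingParity σ (r i) (r j) (walkTwist τ (P i j hij)) (r k) (r l)
      (walkTwist τ (P k l hkl)) = 0 := by
    refine crossingParity_walk_left _ fun e he => crossingParity_walk_right _ fun e' he' => ?_
    have hfst := Walk.dart_fst_mem_support_of_mem_darts _ he
    have hsnd := Walk.dart_snd_mem_support_of_mem_darts _ he
    have hfst' := Walk.dart_fst_mem_support_of_mem_darts _ he'
    have hsnd' := Walk.dart_snd_mem_support_of_mem_darts _ he'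
    exact hτ _ _ _ _ e.adj e'.adj (hdisjoint hfst hfst') (hdisjoint hfst hsnd')
      (hdisjoint hsnd hfst') (hdisjoint hsnd hsnd')
  simpa only [crossingParity, hij, hkl, dif_pos] using hcross

-- The sum over all pairs of independent edges: every twist occurs twice, and the crossings of the
-- semicircles add up to an odd number.
theorem not_hasEvenDrawing_completeGraph_five : ¬ HasEvenDrawing (completeGraph (Fin 5)) := by
  rintro ⟨σ, τ, hσ, hτ⟩
  have even (p : Fin 4 → Fin 5) (hp : p.Injective := by decide) :
      crossingParity σ (p 0) (p 1) (τ (p 0) (p 1)) (p 2) (p 3) (τ (p 2) (p 3)) = 0 := by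
    apply hτ <;> simp [hp.eq_iff]
  have swap (x y : Fin 5) (hxy : x ≠ y := by decide) : σ y x = 1 + σ x y := hσ x y hxy
  simp only [crossingParity] at even
  refine one_ne_zero (α := ZMod 2) ?_
  linear_combination (norm := (simp only [Matrix.cons_val]; ring_nf; reduce_mod_char))
    even ![0, 1, 2, 3] + even ![0, 2, 1, 3] + even ![0, 3, 1, 2] +
    even ![0, 1, 2, 4] + even ![0, 2, 1, 4] + even ![0, 4, 1, 2] +
    even ![0, 1, 3, 4] + even ![0, 3, 1, 4] + even ![0, 4, 1, 3] +
    even ![0, 2, 3, 4] + even ![0, 3, 2, 4] + even ![0, 4, 2, 3] +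
    even ![1, 2, 3, 4] + even ![1, 3, 2, 4] + even ![1, 4, 2, 3] +
    swap 2 3 + swap 2 4 + swap 3 4

theorem not_hasEvenDrawing_completeBipartiteGraph_three_three :
    ¬ HasEvenDrawing (completeBipartiteGraph (Fin 3) (Fin 3)) := by
  rintro ⟨σ, τ, hσ, hτ⟩
  have even (a c b d : Fin 3) (hac : a ≠ c := by decide) (hbd : b ≠ d := by decide) :
      crossingParity σ (.inl a) (.inr b) (τ (.inl a) (.inr b))
        (.inl c) (.inr d) (τ (.inl c) (.inr d)) = 0 := by
    apply hτ <;> simp [hac, hbd]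
  have swap (a b : Fin 3) : σ (.inr b) (.inl a) = 1 + σ (.inl a) (.inr b) := hσ _ _ (by simp)
  have swap' (a b : Fin 3) (hab : a ≠ b := by decide) :
      σ (.inr b) (.inr a) = 1 + σ (.inr a) (.inr b) := hσ _ _ (by simpa)
  simp only [crossingParity, swap] at even
  refine one_ne_zero (α := ZMod 2) ?_
  linear_combination (norm := (ring_nf; reduce_mod_char))
    even 0 1 0 1 + even 0 1 1 0 + even 0 1 0 2 + even 0 1 2 0 + even 0 1 1 2 + even 0 1 2 1 +
    even 0 2 0 1 + even 0 2 1 0 + even 0 2 0 2 + even 0 2 2 0 + even 0 2 1 2 + even 0 2 2 1 +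
    even 1 2 0 1 + even 1 2 1 0 + even 1 2 0 2 + even 1 2 2 0 + even 1 2 1 2 + even 1 2 2 1 +
    swap' 0 1 + swap' 0 2 + swap' 1 2

theorem HasEvenDrawing.isPlanar (hG : HasEvenDrawing G) : G.IsPlanar :=
  ⟨fun h => not_hasEvenDrawing_completeGraph_five (hG.of_isMinorOf h),
    fun h => not_hasEvenDrawing_completeBipartiteGraph_three_three (hG.of_isMinorOf h)⟩

end EvenDrawings

section TwoPageDrawings

variable {V α : Type*} [LinearOrder α] {G P Q : SimpleGraph V}
  {pos : V → α}

/-- No two edges of `P` cross when the vertices are placed along a line by `pos` and the edges are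
drawn as semicircles on one side of it; that is, `P` can be a page of a book embedding. -/
def IsNoncrossing (pos : V → α) (P : SimpleGraph V) : Prop :=
  ∀ ⦃a b c d⦄, P.Adj a b → P.Adj c d → pos a < pos c → pos c < pos b → ¬ pos b < pos d

theorem isNoncrossing_of_forall_adj (R : α → α → Prop)
    (hPR : ∀ ⦃a b⦄, P.Adj a b → pos a < pos b → R (pos a) (pos b))
    (hR : ∀ i j k l, R i j → R k l → i < k → k < j → ¬ j < l) : IsNoncrossing pos P :=
  fun _ _ _ _ hab hcd hac hcb hbd =>
    hR _ _ _ _ (hPR hab (hac.trans hcb)) (hPR hcd (hcb.trans hbd)) hac hcb hbd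

theorem IsNoncrossing.sum_lt_eq_zero (hP : IsNoncrossing pos P) {σ : V → V → ZMod 2}
    (hσ : ∀ x y, σ x y = if pos x < pos y then 1 else 0) {a b c d : V} (hab : P.Adj a b)
    (hcd : P.Adj c d) (hac : pos a ≠ pos c) (had : pos a ≠ pos d) (hbc : pos b ≠ pos c)
    (hbd : pos b ≠ pos d) : σ a c + σ b c + σ a d + σ b d = 0 := by
  have h₁ := hP hab hcd
  have h₂ := hP hab hcd.symm
  have h₃ := hP hab.symm hcd
  have h₄ := hP hab.symm hcd.symm
  have h₅ := hP hcd hab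
  have h₆ := hP hcd hab.symm
  have h₇ := hP hcd.symm hab
  have h₈ := hP hcd.symm hab.symm
  simp only [hσ]
  grind

-- The edges of `P` are reflected to the other side of the line, that is, pulled across all vertices
-- between their ends.
theorem isPlanar_of_le_sup (hpos : pos.Injective) (hP : IsNoncrossing pos P)
    (hQ : IsNoncrossing pos Q) (hG : G ≤ P ⊔ Q) : G.IsPlanar := by
  classical
  set σ : V → V → ZMod 2 := fun x y => if pos x < pos y then 1 else 0 with hσ
  have swap (x y : V) (hxy : x ≠ y) : σ y x = 1 + σ x y := by
    rcases lt_or_gt_of_ne (hpos.ne hxy) with h | h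
    · simp only [hσ, if_pos h, if_neg h.not_gt]
      decide
    · simp only [hσ, if_pos h, if_neg h.not_gt, add_zero]
  refine HasEvenDrawing.isPlanar
    ⟨σ, fun a b x => if P.Adj a b then σ a x + σ b x else 0, swap, ?_⟩
  intro a b c d hab hcd hac had hbc hbd
  have key {R : SimpleGraph V} (hR : IsNoncrossing pos R) (h : R.Adj a b) (h' : R.Adj c d) :
      σ a c + σ b c + σ a d + σ b d = 0 :=
    hR.sum_lt_eq_zero (fun _ _ => rfl) h h' (hpos.ne hac) (hpos.ne had) (hpos.ne hbc) (hpos.ne hbd)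
  simp only [crossingParity, swap _ _ hac, swap _ _ had, swap _ _ hbc, swap _ _ hbd]
  by_cases hPab : P.Adj a b <;> by_cases hPcd : P.Adj c d
  · have := key hP hPab hPcd
    simp only [hPab, hPcd, if_true]
    grind
  · simp only [hPab, hPcd, if_true, if_false]
    grind
  · simp only [hPab, hPcd, if_false, if_true]
    grind
  · have := key hQ ((hG hab).resolve_left hPab) ((hG hcd).resolve_left hPcd)
    simp only [hPab, hPcd, if_false]
    grind

end TwoPageDrawings

section DegreeAndGirth

theorem degN_eq_card {n : ℕ} {G : SimpleGraph (Fin n)} {v : Fin n} (S : Finset ℕ)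
    (hlt : ∀ x ∈ S, x < n) (hadj : ∀ x : Fin n, G.Adj v x ↔ ↑x ∈ S) : G.degN v = S.card := by
  rw [degN, ← Set.ncard_image_of_injective _ Fin.val_injective, ← Set.ncard_coe_finset]
  congr 1
  ext x
  simp only [Set.mem_image, mem_neighborSet, hadj, SetLike.mem_coe]
  exact ⟨fun ⟨_, hy, hyx⟩ => hyx ▸ hy, fun hx => ⟨⟨x, hlt x hx⟩, hx, rfl⟩⟩

theorem degN_eq_length {n : ℕ} {G : SimpleGraph (Fin n)} {v : Fin n} (l : List ℕ) (hl : l.Nodup)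
    (hlt : ∀ x ∈ l, x < n) (hadj : ∀ x : Fin n, G.Adj v x ↔ ↑x ∈ l) : G.degN v = l.length := by
  rw [← List.toFinset_card_of_nodup hl]
  exact degN_eq_card l.toFinset (by simpa using hlt) (by simpa using hadj)

theorem girth_eq_three_of_adj {V : Type*} {G : SimpleGraph V} {a b c : V} (hab : G.Adj a b)
    (hbc : G.Adj b c) (hca : G.Adj c a) : G.girth = 3 := by
  have hcycle : (Walk.cons hab (.cons hbc (.cons hca .nil))).IsCycle := by
    simp [Walk.isCycle_def, Walk.isTrail_def, hab.ne, hab.ne', hbc.ne, hca.ne, hca.ne']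
  exact le_antisymm hcycle.girth_le_length (three_le_girth fun h => h _ hcycle)

end DegreeAndGirth

section GyroelongatedBipyramid

/-- The edges `ab` of the gyroelongated bipyramid over an `m`-gon, for one of the two orders of
their ends: the vertices `0, …, 2m - 1` form a cycle in which all pairs at distance at most two are
adjacent, and the apices `2m` and `2m + 1` are joined to the even and to the odd ones. -/
def IsBipyramidArc (m a b : ℕ) : Prop :=
  (b < 2 * m ∧ (b = a + 1 ∨ b = a + 2 ∨ b + 1 = a + 2 * m ∨ b + 2 = a + 2 * m)) ∨
    (a < 2 * m ∧ b = 2 * m + a % 2)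

/-- The gyroelongated bipyramid over an `m`-gon. -/
def bipyramid (m : ℕ) : SimpleGraph (Fin (2 * m + 2)) :=
  SimpleGraph.fromRel fun a b => IsBipyramidArc m a b

/-- The place of a vertex of the bipyramid along the spine of a two-page book embedding. -/
def bipyramidPos {m : ℕ} (v : Fin (2 * m + 2)) : ℕ :=
  if (v : ℕ) + 2 = 2 * m then 2 * m else
  if (v : ℕ) = 2 * m then 2 * m + 1 else
  if (v : ℕ) = 2 * m + 1 then 2 * m - 2 else v

/-- The arcs of the bipyramid drawn below the spine of the book embedding. -/
def IsBipyramidLowerArc (m a b : ℕ) : Prop :=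
  (a % 2 = 1 ∧ b % 2 = 1 ∧ ¬ (a + 3 = 2 * m ∧ b + 1 = 2 * m)) ∨
    (a = 0 ∧ (b + 1 = 2 * m ∨ b + 2 = 2 * m))

/-- The lower page of the book embedding of the bipyramid. -/
def bipyramidLowerPage (m : ℕ) : SimpleGraph (Fin (2 * m + 2)) :=
  SimpleGraph.fromRel fun a b => IsBipyramidArc m a b ∧ IsBipyramidLowerArc m a b

/-- The upper page of the book embedding of the bipyramid. -/
def bipyramidUpperPage (m : ℕ) : SimpleGraph (Fin (2 * m + 2)) :=
  SimpleGraph.fromRel fun a b => IsBipyramidArc m a b ∧ ¬ IsBipyramidLowerArc m a b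

variable {m : ℕ}

theorem bipyramid_adj {a b : Fin (2 * m + 2)} :
    (bipyramid m).Adj a b ↔ a ≠ b ∧ (IsBipyramidArc m a b ∨ IsBipyramidArc m b a) := by
  rw [bipyramid, SimpleGraph.fromRel_adj]

theorem bipyramid_degN_of_lt (hm : 3 ≤ m) {v : Fin (2 * m + 2)} (hv : (v : ℕ) < 2 * m) :
    (bipyramid m).degN v = 5 := by
  refine degN_eq_length [if (v : ℕ) < 2 then v + 2 * m - 2 else v - 2,
    if (v : ℕ) < 1 then v + 2 * m - 1 else v - 1,
    if v + 1 < 2 * m then v + 1 else v + 1 - 2 * m,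
    if v + 2 < 2 * m then v + 2 else v + 2 - 2 * m, 2 * m + v % 2] ?_ ?_ ?_
  · simp only [List.nodup_cons, List.mem_cons, List.not_mem_nil, List.nodup_nil, or_false,
      not_false_eq_true, and_true]
    split_ifs <;> omega
  · simp only [List.forall_mem_cons, List.not_mem_nil, IsEmpty.forall_iff, implies_true, and_true]
    split_ifs <;> omega
  · intro x
    simp only [bipyramid_adj, IsBipyramidArc, ne_eq, Fin.ext_iff, List.mem_cons, List.not_mem_nil]
    constructor
    · rintro ⟨-, h | h⟩ <;> split_ifs <;> omega
    · rintro (h | h | h | h | h | ⟨⟨⟩⟩) <;> (try split_ifs at h) <;> omega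

theorem bipyramid_degN_apex (i : ℕ) (hi : i < 2) :
    (bipyramid m).degN ⟨2 * m + i, by omega⟩ = m := by
  rw [degN_eq_card ((Finset.range m).image fun k => 2 * k + i)]
  · rw [Finset.card_image_of_injective _ fun a b h => by simpa using h, Finset.card_range]
  · simp only [Finset.mem_image, Finset.mem_range]
    omega
  · intro x
    simp only [bipyramid_adj, IsBipyramidArc, Finset.mem_image, Finset.mem_range, ne_eq,
      Fin.ext_iff]
    constructor
    · intro h
      exact ⟨x / 2, by omega, by omega⟩
    · omega

theorem bipyramidPos_injective (hm : 1 ≤ m) : (bipyramidPos (m := m)).Injective := by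
  intro a b hab
  simp only [bipyramidPos] at hab
  split_ifs at hab <;> omega

theorem isNoncrossing_bipyramidLowerPage (hm : 3 ≤ m) :
    IsNoncrossing bipyramidPos (bipyramidLowerPage m) := by
  refine isNoncrossing_of_forall_adj (fun i j => j = i + 1 ∨
    (i % 2 = 1 ∧ (j = i + 2 ∧ j + 3 ≤ 2 * m ∨ i + 3 ≤ 2 * m ∧ j + 2 = 2 * m)) ∨
    (i = 0 ∧ (j + 1 = 2 * m ∨ j = 2 * m)) ∨ (i = 1 ∧ j + 1 = 2 * m)) ?_ (by omega)
  rintro a b ⟨-, hab | hab⟩ <;>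
  · simp only [IsBipyramidArc, IsBipyramidLowerArc] at hab
    simp only [bipyramidPos]
    split_ifs <;> omega

theorem isNoncrossing_bipyramidUpperPage (hm : 3 ≤ m) :
    IsNoncrossing bipyramidPos (bipyramidUpperPage m) := by
  refine isNoncrossing_of_forall_adj (fun i j => j = i + 1 ∨
    (i % 2 = 0 ∧ i + 4 ≤ 2 * m ∧ (j = i + 2 ∧ j + 4 ≤ 2 * m ∨ j = 2 * m + 1)) ∨
    (i + 4 = 2 * m ∧ j = 2 * m) ∨ (i + 3 = 2 * m ∧ (j = 2 * m ∨ j + 1 = 2 * m))) ?_ (by omega)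
  rintro a b ⟨-, hab | hab⟩ <;>
  · simp only [IsBipyramidArc, IsBipyramidLowerArc] at hab
    simp only [bipyramidPos]
    split_ifs <;> omega

theorem bipyramid_le_sup : bipyramid m ≤ bipyramidLowerPage m ⊔ bipyramidUpperPage m := by
  intro a b hab
  simp only [bipyramid, bipyramidLowerPage, bipyramidUpperPage, sup_adj, fromRel_adj] at hab ⊢
  tauto

theorem isPlanar_bipyramid (hm : 3 ≤ m) : (bipyramid m).IsPlanar :=
  isPlanar_of_le_sup (bipyramidPos_injective (by omega)) (isNoncrossing_bipyramidLowerPage hm)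
    (isNoncrossing_bipyramidUpperPage hm) bipyramid_le_sup

theorem girth_bipyramid (hm : 3 ≤ m) : (bipyramid m).girth = 3 := by
  apply girth_eq_three_of_adj (a := ⟨0, by omega⟩) (b := ⟨1, by omega⟩) (c := ⟨2, by omega⟩) <;>
  · simp only [bipyramid_adj, IsBipyramidArc, ne_eq, Fin.mk.injEq, true_or, or_true, and_true]
    omega

theorem isBigirthGraph_bipyramid (hm : 3 ≤ m) : IsBigirthGraph (bipyramid m) 5 m 3 := by
  have hzero : (0 : ℕ) < 2 * m := by omega
  refine ⟨girth_bipyramid hm, fun v => ?_, ⟨⟨0, by omega⟩, bipyramid_degN_of_lt hm hzero⟩,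
    ⟨_, bipyramid_degN_apex 0 two_pos⟩⟩
  rcases lt_or_ge (v : ℕ) (2 * m) with hv | hv
  · exact .inl (bipyramid_degN_of_lt hm hv)
  · right
    obtain ⟨i, hi⟩ := Nat.exists_eq_add_of_le hv
    have hapex : v = ⟨2 * m + i, by omega⟩ := Fin.ext hi
    rw [hapex]
    exact bipyramid_degN_apex i (by omega)

end GyroelongatedBipyramid

section CappedFan

/-- The edges of the left cap of `cappedFan`, as pairs in increasing order. -/
def capArcs : List (ℕ × ℕ) :=
  [(0, 1), (0, 5), (0, 6), (0, 7), (1, 2), (1, 3), (1, 5), (1, 11), (2, 3), (2, 9), (2, 10),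
    (2, 11), (3, 4), (3, 5), (3, 9), (4, 5), (4, 6), (4, 8), (4, 9), (5, 6), (6, 7), (6, 8), (7, 8),
    (7, 10), (7, 12), (8, 9), (8, 10), (9, 10), (10, 11), (11, 12), (11, 13)]

/-- The edges `ab` with `a < b` of an infinite fan, capped on the left: beyond the cap, each vertex
is joined to its two predecessors, its two successors and the hub `0`. -/
def IsFanArc (a b : ℕ) : Prop :=
  (a, b) ∈ capArcs ∨ (12 ≤ a ∧ (b = a + 1 ∨ b = a + 2)) ∨ (a = 0 ∧ 12 ≤ b)

instance : DecidableRel IsFanArc := fun a b => by unfold IsFanArc; infer_instance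

/-- A number whose parity is the page carrying the edge `ab` of the infinite fan, with `a < b`, in a
two-page book embedding whose spine is the natural order. -/
def fanPage (a b : ℕ) : ℕ :=
  if b < 12 then
    if (a, b) ∈ [(0, 5), (0, 6), (0, 7), (1, 3), (1, 5), (3, 5), (7, 10), (8, 10)] then 1 else 0
  else b + 1

/-- The part of the infinite fan on `0, …, n - 12`. -/
def leftFan (n : ℕ) : SimpleGraph (Fin n) :=
  SimpleGraph.fromRel fun a b => IsFanArc a b ∧ (b : ℕ) + 12 ≤ n

/-- The page of `leftFan n` given by the parity of `p`. Edges between consecutive vertices belong to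
both pages. -/
def leftFanPage (n p : ℕ) : SimpleGraph (Fin n) :=
  SimpleGraph.fromRel fun a b => IsFanArc a b ∧ (b : ℕ) + 12 ≤ n ∧
    ((b : ℕ) = a + 1 ∨ fanPage a b ≡ p [MOD 2])

/-- The fan with the hub `0`, closed off on both sides by caps that are mirror images of each other
under `v ↦ -v`. -/
def cappedFan (n : ℕ) [NeZero n] : SimpleGraph (Fin n) :=
  leftFan n ⊔ (leftFan n).comap Neg.neg

/-- The page of `cappedFan n` given by the parity of `p`. -/
def cappedFanPage (n p : ℕ) [NeZero n] : SimpleGraph (Fin n) :=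
  leftFanPage n p ⊔ (leftFanPage n (p + n)).comap Neg.neg

theorem bounds_of_mem_capArcs {a b : ℕ} (h : (a, b) ∈ capArcs) :
    a < b ∧ a ≤ 11 ∧ b ≤ 13 ∧ (b = 13 → a = 11) := by
  have hall : ∀ e ∈ capArcs, e.1 < e.2 ∧ e.1 ≤ 11 ∧ e.2 ≤ 13 ∧ (e.2 = 13 → e.1 = 11) := by decide
  exact hall _ h

theorem fanPage_of_le {a b : ℕ} (hb : 12 ≤ b) : fanPage a b = b + 1 :=
  if_neg hb.not_gt

theorem IsFanArc.lt {a b : ℕ} (h : IsFanArc a b) : a < b := by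
  rcases h with h | h | h
  · exact (bounds_of_mem_capArcs h).1
  · omega
  · omega

theorem IsFanArc.cases_of_le {a b : ℕ} (h : IsFanArc a b) (hb : 12 ≤ b) :
    (12 ≤ a ∧ (b = a + 1 ∨ b = a + 2)) ∨ a = 0 ∨ (a < 12 ∧ b = 12) ∨ (a = 11 ∧ b = 13) := by
  rcases h with h | h | h
  · have := bounds_of_mem_capArcs h
    omega
  · exact .inl h
  · exact .inr (.inl h.1)

theorem fanPage_ne_of_capArcs_crossing {a b c d : ℕ} (hab : (a, b) ∈ capArcs)
    (hcd : (c, d) ∈ capArcs) (hac : a < c) (hcb : c < b) (hbd : b < d) :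
    ¬ fanPage a b ≡ fanPage c d [MOD 2] := by
  have hall : ∀ e ∈ capArcs, ∀ f ∈ capArcs, e.1 < f.1 → f.1 < e.2 → e.2 < f.2 →
      ¬ fanPage e.1 e.2 ≡ fanPage f.1 f.2 [MOD 2] := by
    decide
  exact hall _ hab _ hcd hac hcb hbd

theorem IsFanArc.fanPage_ne_of_crossing {a b c d : ℕ} (hab : IsFanArc a b) (hcd : IsFanArc c d)
    (hac : a < c) (hcb : c < b) (hbd : b < d) : ¬ fanPage a b ≡ fanPage c d [MOD 2] := by
  by_cases hb : 12 ≤ b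
  · have := hab.cases_of_le hb
    have := hcd.cases_of_le (hb.trans hbd.le)
    rw [fanPage_of_le hb, fanPage_of_le (hb.trans hbd.le), Nat.ModEq]
    omega
  · exact fanPage_ne_of_capArcs_crossing (hab.resolve_right (by omega))
      (hcd.resolve_right (by omega)) hac hcb hbd

theorem isNoncrossing_leftFanPage (n p : ℕ) : IsNoncrossing Fin.val (leftFanPage n p) := by
  refine isNoncrossing_of_forall_adj
    (fun i j => IsFanArc i j ∧ (j = i + 1 ∨ fanPage i j ≡ p [MOD 2])) ?_ ?_
  · rintro a b ⟨-, ⟨h, -, hp⟩ | ⟨h, -, -⟩⟩ hlt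
    · exact ⟨h, hp⟩
    · exact absurd h.lt hlt.not_gt
  · rintro i j k l ⟨hij, hp⟩ ⟨hkl, hq⟩ hik hkj hjl
    exact hij.fanPage_ne_of_crossing hkl hik hkj hjl
      ((hp.resolve_left (by omega)).trans (hq.resolve_left (by omega)).symm)

theorem leftFanPage_le (n p : ℕ) : leftFanPage n p ≤ leftFan n := by
  intro a b hab
  simp only [leftFanPage, leftFan, fromRel_adj] at hab ⊢
  tauto

theorem leftFan_le_sup (n p : ℕ) : leftFan n ≤ leftFanPage n p ⊔ leftFanPage n (p + 1) := by
  intro a b hab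
  simp only [leftFanPage, leftFan, sup_adj, fromRel_adj, Nat.ModEq] at hab ⊢
  grind

theorem leftFanPage_add_self_add_self (n p : ℕ) : leftFanPage n (p + n + n) = leftFanPage n p := by
  have h (k : ℕ) : k ≡ p + n + n [MOD 2] ↔ k ≡ p [MOD 2] := by
    simp only [Nat.ModEq]
    omega
  simp only [leftFanPage, h]

variable {n : ℕ} [NeZero n]

theorem IsNoncrossing.comap_neg {P : SimpleGraph (Fin n)} (hP : IsNoncrossing Fin.val P) :
    IsNoncrossing Fin.val (P.comap Neg.neg) := by
  intro a b c d hab hcd hac hcb hbd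
  have h₁ := hP hab hcd.symm
  have h₂ := hP hcd.symm hab.symm
  simp only [Fin.val_neg, Fin.ext_iff, Fin.val_zero] at h₁ h₂
  split_ifs at h₁ h₂ <;> omega

-- Away from the cap, the reflection preserves the fan; it exchanges the pages if `n` is odd.
theorem leftFanPage_adj_neg {p : ℕ} {a b : Fin n} (h : (leftFanPage n p).Adj a b)
    (hlarge : 14 ≤ (a : ℕ) ∨ 14 ≤ (b : ℕ)) : (leftFanPage n (p + n)).Adj (-a) (-b) := by
  wlog hlt : a < b generalizing a b
  · exact (this h.symm hlarge.symm (h.ne.lt_or_gt.resolve_left hlt)).symm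
  obtain ⟨hne, ⟨harc, hbn, hp⟩ | ⟨harc, -⟩⟩ := h
  swap
  · exact absurd harc.lt hlt.not_gt
  have hcases := harc.cases_of_le (by omega)
  rw [fanPage_of_le (by omega), Nat.ModEq] at hp
  refine ⟨neg_injective.ne hne, ?_⟩
  have hb : ((-b : Fin n) : ℕ) = n - b := by
    rw [Fin.val_neg, if_neg (by rintro rfl; exact absurd harc.lt (Nat.not_lt_zero _))]
  rcases eq_or_ne a 0 with rfl | ha
  · refine .inl ?_
    beta_reduce
    rw [neg_zero, hb, fanPage_of_le (by omega), Nat.ModEq, Fin.val_zero]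
    simp only [Fin.val_zero] at hp
    exact ⟨.inr (.inr ⟨rfl, by omega⟩), by omega, by omega⟩
  · have ha' : (a : ℕ) ≠ 0 := Fin.val_ne_zero_iff.mpr ha
    refine .inr ?_
    beta_reduce
    rw [hb, Fin.val_neg, if_neg ha, fanPage_of_le (by omega), Nat.ModEq]
    exact ⟨.inr (.inl (by omega)), by omega, by omega⟩

theorem leftFan_adj_neg {a b : Fin n} (h : (leftFan n).Adj a b)
    (hlarge : 14 ≤ (a : ℕ) ∨ 14 ≤ (b : ℕ)) : (leftFan n).Adj (-a) (-b) :=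
  (leftFan_le_sup n 0 h).elim (fun h => leftFanPage_le n _ (leftFanPage_adj_neg h hlarge))
    fun h => leftFanPage_le n _ (leftFanPage_adj_neg h hlarge)

theorem isNoncrossing_cappedFanPage (hn : 28 ≤ n) (p : ℕ) :
    IsNoncrossing Fin.val (cappedFanPage n p) := by
  have hleft := isNoncrossing_leftFanPage n p
  have hright := (isNoncrossing_leftFanPage n (p + n)).comap_neg
  have left_or_mem_right {a b : Fin n} (h : (leftFanPage n p).Adj a b) :
      ((a : ℕ) ≤ 13 ∧ (b : ℕ) ≤ 13) ∨ ((leftFanPage n (p + n)).comap Neg.neg).Adj a b := by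
    rw [or_iff_not_imp_left]
    exact fun hab => leftFanPage_adj_neg h (by omega)
  have right_or_mem_left {a b : Fin n} (h : ((leftFanPage n (p + n)).comap Neg.neg).Adj a b) :
      (((a : ℕ) = 0 ∨ n ≤ a + 13) ∧ ((b : ℕ) = 0 ∨ n ≤ b + 13)) ∨ (leftFanPage n p).Adj a b := by
    rw [or_iff_not_imp_left]
    intro hab
    have := leftFanPage_adj_neg h (by simp only [Fin.val_neg, Fin.ext_iff, Fin.val_zero]; grind)
    rwa [leftFanPage_add_self_add_self, neg_neg, neg_neg] at this
  rintro a b c d (hab | hab) (hcd | hcd) hac hcb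
  · exact hleft hab hcd hac hcb
  · rcases left_or_mem_right hab with hab' | hab'
    · rcases right_or_mem_left hcd with hcd' | hcd'
      · omega
      · exact hleft hab hcd' hac hcb
    · exact hright hab' hcd hac hcb
  · rcases left_or_mem_right hcd with hcd' | hcd'
    · rcases right_or_mem_left hab with hab' | hab'
      · omega
      · exact hleft hab' hcd hac hcb
    · exact hright hab hcd' hac hcb
  · exact hright hab hcd hac hcb

theorem cappedFan_le_sup : cappedFan n ≤ cappedFanPage n 0 ⊔ cappedFanPage n 1 := by
  rintro a b (hab | hab)
  · exact (leftFan_le_sup n 0 hab).imp .inl .inl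
  · have := leftFan_le_sup n (0 + n) hab
    rw [add_right_comm] at this
    exact this.imp .inr .inr

theorem isPlanar_cappedFan (hn : 28 ≤ n) : (cappedFan n).IsPlanar :=
  isPlanar_of_le_sup Fin.val_injective (isNoncrossing_cappedFanPage hn 0)
    (isNoncrossing_cappedFanPage hn 1) cappedFan_le_sup

theorem cappedFan_adj_iff (hn : 28 ≤ n) {v x : Fin n} (hv : 0 < (v : ℕ)) (hvn : (v : ℕ) + 14 ≤ n) :
    (cappedFan n).Adj v x ↔ IsFanArc v x ∨ IsFanArc x v := by
  have hleft : (cappedFan n).Adj v x ↔ (leftFan n).Adj v x := by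
    refine ⟨?_, .inl⟩
    rintro (h | h)
    · exact h
    · have := leftFan_adj_neg h (.inl ?_)
      · rwa [neg_neg, neg_neg] at this
      · rw [Fin.val_neg, if_neg (Fin.val_ne_zero_iff.mp hv.ne')]
        omega
  rw [hleft, leftFan, fromRel_adj]
  constructor
  · exact fun ⟨_, h⟩ => h.imp And.left And.left
  · rintro (h | h)
    · have := h.lt
      have := h.cases_of_le
      exact ⟨fun hvx => h.lt.ne (congrArg Fin.val hvx), .inl ⟨h, by omega⟩⟩
    · exact ⟨fun hvx => h.lt.ne' (congrArg Fin.val hvx), .inr ⟨h, by omega⟩⟩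

theorem cappedFan_degN_neg (v : Fin n) : (cappedFan n).degN (-v) = (cappedFan n).degN v := by
  have hadj (a b : Fin n) : (cappedFan n).Adj (-a) (-b) ↔ (cappedFan n).Adj a b := by
    simp only [cappedFan, sup_adj, comap_adj, neg_neg, or_comm]
  rw [degN, degN, ← Set.ncard_image_of_injective _ (neg_injective (G := Fin n))]
  congr 1
  ext x
  rw [Set.image_neg_eq_neg, Set.mem_neg, mem_neighborSet, mem_neighborSet, ← hadj, neg_neg, neg_neg]

theorem cappedFan_degN_of_le (hn : 28 ≤ n) {v : Fin n} (hv : 0 < (v : ℕ))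
    (hvn : (v : ℕ) + 14 ≤ n) : (cappedFan n).degN v = 5 := by
  by_cases hcap : (v : ℕ) ≤ 13
  · rw [degN_eq_card ((Finset.range 16).filter fun x => IsFanArc v x ∨ IsFanArc x v)]
    · generalize (v : ℕ) = k at hv hcap
      interval_cases k <;> decide
    · intro x hx
      have := Finset.mem_range.mp (Finset.mem_filter.mp hx).1
      omega
    · intro x
      rw [cappedFan_adj_iff hn hv hvn, Finset.mem_filter, Finset.mem_range]
      refine ⟨fun h => ⟨?_, h⟩, And.right⟩
      rcases h with h | h
      · have := h.cases_of_le
        omega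
      · have := h.lt
        omega
  · rw [degN_eq_length [v - 2, v - 1, v + 1, v + 2, 0]]
    · rfl
    · simp only [List.nodup_cons, List.mem_cons, List.not_mem_nil, List.nodup_nil, or_false,
        not_false_eq_true, and_true]
      omega
    · simp only [List.forall_mem_cons, List.not_mem_nil, IsEmpty.forall_iff, implies_true,
        and_true]
      omega
    · intro x
      rw [cappedFan_adj_iff hn hv hvn]
      simp only [List.mem_cons, List.not_mem_nil, or_false]
      constructor
      · rintro (h | h)
        · have := h.cases_of_le (by have := h.lt; omega)
          omega
        · have := h.cases_of_le (by omega)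
          omega
      · rintro (h | h | h | h | h)
        · exact .inr (.inr (.inl (by omega)))
        · exact .inr (.inr (.inl (by omega)))
        · exact .inl (.inr (.inl (by omega)))
        · exact .inl (.inr (.inl (by omega)))
        · exact .inr (.inr (.inr (by omega)))

theorem cappedFan_degN_of_ne_zero (hn : 28 ≤ n) {v : Fin n} (hv : v ≠ 0) :
    (cappedFan n).degN v = 5 := by
  have hpos : 0 < (v : ℕ) := Fin.pos_iff_ne_zero.mpr hv
  by_cases hvn : (v : ℕ) + 14 ≤ n
  · exact cappedFan_degN_of_le hn hpos hvn
  · have hneg : ((-v : Fin n) : ℕ) = n - v := by rw [Fin.val_neg, if_neg hv]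
    rw [← cappedFan_degN_neg]
    exact cappedFan_degN_of_le hn (by omega) (by omega)

theorem cappedFan_zero_adj_iff (hn : 28 ≤ n) (x : Fin n) :
    (cappedFan n).Adj 0 x ↔ (x : ℕ) ∈
      [1, 5, 6, 7, n - 7, n - 6, n - 5, n - 1] ++ List.range' 12 (n - 23) := by
  have harc (k : ℕ) : IsFanArc 0 k ↔ k = 1 ∨ k = 5 ∨ k = 6 ∨ k = 7 ∨ 12 ≤ k := by
    simp [IsFanArc, capArcs, or_assoc]
  have hfan (x : Fin n) : (leftFan n).Adj 0 x ↔
      (x : ℕ) = 1 ∨ (x : ℕ) = 5 ∨ (x : ℕ) = 6 ∨ (x : ℕ) = 7 ∨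
        (12 ≤ (x : ℕ) ∧ (x : ℕ) + 12 ≤ n) := by
    have hnot : ¬ IsFanArc x 0 := fun h => absurd h.lt (Nat.not_lt_zero _)
    simp only [leftFan, fromRel_adj, Fin.val_zero, harc, hnot]
    grind
  simp only [cappedFan, sup_adj, comap_adj, neg_zero, hfan, Fin.val_neg]
  simp only [List.mem_append, List.mem_cons, List.not_mem_nil, or_false, List.mem_range'_1]
  grind

theorem isBigirthGraph_cappedFan {m : ℕ} (hm : 13 ≤ m) :
    IsBigirthGraph (cappedFan (m + 15)) 5 m 3 := by
  have hzero : (cappedFan (m + 15)).degN 0 = m := by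
    rw [degN_eq_length _ ?_ ?_ (cappedFan_zero_adj_iff (by omega))]
    · simp only [List.length_append, List.length_cons, List.length_nil, List.length_range']
      omega
    · refine List.nodup_append.mpr ⟨?_, List.nodup_range', ?_⟩
      · simp
      · intro x hx y hy
        simp only [List.mem_cons, List.not_mem_nil, or_false, List.mem_range'_1] at hx hy
        omega
    · simp only [List.mem_append, List.mem_cons, List.not_mem_nil, or_false, List.mem_range'_1]
      omega
  have hne (v : Fin (m + 15)) (hv : v ≠ 0) : (cappedFan (m + 15)).degN v = 5 :=
    cappedFan_degN_of_ne_zero (by omega) hv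
  have hcap {a b : ℕ} (hab : (a, b) ∈ capArcs) (ha : a < m + 15) (hb : b < m + 15) :
      (cappedFan (m + 15)).Adj ⟨a, ha⟩ ⟨b, hb⟩ := by
    have := bounds_of_mem_capArcs hab
    exact .inl ⟨fun h => this.1.ne (congrArg Fin.val h), .inl ⟨.inl hab, by simp only; omega⟩⟩
  refine ⟨?_, fun v => ?_, ⟨1, hne 1 (by simp)⟩, 0, hzero⟩
  · have h₂₃ : (2, 3) ∈ capArcs := by decide
    have h₃₉ : (3, 9) ∈ capArcs := by decide
    have h₂₉ : (2, 9) ∈ capArcs := by decide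
    exact girth_eq_three_of_adj (hcap h₂₃ (by omega) (by omega)) (hcap h₃₉ _ (by omega))
      (hcap h₂₉ _ _).symm
  · rcases eq_or_ne v 0 with rfl | hv
    · exact .inr hzero
    · exact .inl (hne v hv)

end CappedFan

/-- For `m ≥ 6` there is a finite planar `({5,m};3)`-graph on `2m+2`
vertices, and every such graph has at least `m+7` vertices, so
`m+7 ≤ n_p({5,m};3) ≤ 2m+2`; moreover for `m ≥ 13` there is a finite planar
`({5,m};3)`-graph on `m+15` vertices, so in that range `n_p({5,m};3) ≤ m+15`. -/
theorem planar_five_m_three_bounds (m : ℕ) (hm : 6 ≤ m) :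
    (2 * m + 2) ∈ bicageOrders 5 m 3 ∧
    (∀ n ∈ bicageOrders 5 m 3, m + 7 ≤ n) ∧
    (13 ≤ m → (m + 15) ∈ bicageOrders 5 m 3) := by
  refine ⟨⟨_, inferInstance, bipyramid m, isPlanar_bipyramid (by omega),
      isBigirthGraph_bipyramid (by omega), Fintype.card_fin _⟩, ?_,
    fun hm' => ⟨_, inferInstance, cappedFan (m + 15), isPlanar_cappedFan (by omega),
      isBigirthGraph_cappedFan hm', Fintype.card_fin _⟩⟩
  classical
  rintro n ⟨V, _, G, hG, ⟨-, hdeg, -, w, hw⟩, rfl⟩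
  simp only [degN_eq_degree] at hdeg hw
  have hfive (v : V) : 5 ≤ G.degree v := by
    rcases hdeg v with h | h <;> omega
  exact hw ▸ degree_add_seven_le_card hG hfive w
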